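/- arXiv:2510.22259 — 3 statements merged into one kernel-verified Lean document; each statement's English description precedes it below -/
import Mathlib

section
/- Let s ≥ 4 and n = (4^s−1)/3. The code C_{(2,n,5,1)} has dimension n − 4s and minimum distance d with 5 ≤ d ≤ 6; the extended code of C_{(2,n,5,1)} has length n+1, dimension n − 4s, and minimum distance exactly 6; and if moreover s ≥ 5, the extended code is distance-optimal with respect to the sphere packing bound: every binary linear code of length n+1 and dimension n − 4s has minimum distance at most 6. -/
open Finset

/-- The binary cyclic (BCH-type) code of length `n` over GF(2), consisting of all
words `c` such that `∑ i, c i • β ^ (j * i) = 0` for every `j` in the check set `J`. -/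
def BCHCode {F : Type} [Field F] [Algebra (ZMod 2) F] (n : ℕ) (β : F) (J : Finset ℕ) :
    Submodule (ZMod 2) (Fin n → ZMod 2) where
  carrier := {c | ∀ j ∈ J, ∑ i : Fin n, c i • β ^ (j * (i : ℕ)) = 0}
  add_mem' := by
    intro a b ha hb j hj
    simp only [Set.mem_setOf_eq, Pi.add_apply, add_smul, Finset.sum_add_distrib] at *
    rw [ha j hj, hb j hj, add_zero]
  zero_mem' := by
    intro j hj
    simp
  smul_mem' := by
    intro r c hc j hj
    simp only [Set.mem_setOf_eq, Pi.smul_apply, smul_assoc, ← Finset.smul_sum] at *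
    rw [hc j hj, smul_zero]

/-- The (Euclidean) dual of a binary linear code. -/
def dualCode {N : ℕ} (C : Submodule (ZMod 2) (Fin N → ZMod 2)) :
    Submodule (ZMod 2) (Fin N → ZMod 2) where
  carrier := {b | ∀ c ∈ C, ∑ i, b i * c i = 0}
  add_mem' := by
    intro a b ha hb c hc
    simp only [Set.mem_setOf_eq, Pi.add_apply, add_mul, Finset.sum_add_distrib] at *
    rw [ha c hc, hb c hc, add_zero]
  zero_mem' := by
    intro c hc
    simp
  smul_mem' := by
    intro r b hb c hc
    simp only [Set.mem_setOf_eq, Pi.smul_apply, smul_eq_mul, mul_assoc, ← Finset.mul_sum] at *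
    rw [hb c hc, mul_zero]

/-- The linear map appending an overall parity-check coordinate. -/
def extendMap (N : ℕ) : (Fin N → ZMod 2) →ₗ[ZMod 2] (Fin (N + 1) → ZMod 2) where
  toFun c := fun j => if h : (j : ℕ) < N then c ⟨j, h⟩ else ∑ i, c i
  map_add' a b := by
    funext j
    by_cases h : (j : ℕ) < N <;> simp [h, Finset.sum_add_distrib]
  map_smul' r c := by
    funext j
    by_cases h : (j : ℕ) < N <;> simp [h, Finset.mul_sum]

/-- The extended code of a binary linear code. -/
def extendedCode {N : ℕ} (C : Submodule (ZMod 2) (Fin N → ZMod 2)) :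
    Submodule (ZMod 2) (Fin (N + 1) → ZMod 2) :=
  C.map (extendMap N)

/-- The minimum distance (= minimum nonzero Hamming weight) of a binary linear code. -/
noncomputable def minDist {N : ℕ} (C : Submodule (ZMod 2) (Fin N → ZMod 2)) : ℕ :=
  sInf {w | ∃ c ∈ C, c ≠ 0 ∧ hammingNorm c = w}

/-- The number of codewords of Hamming weight `w` in a binary linear code. -/
noncomputable def weightCount {N : ℕ} (C : Submodule (ZMod 2) (Fin N → ZMod 2)) (w : ℕ) : ℕ :=
  Set.ncard {c : Fin N → ZMod 2 | c ∈ C ∧ hammingNorm c = w}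

/-- The 2-cyclotomic coset of `i` modulo `n`. -/
def cycCoset (n i : ℕ) : Set ℕ := {x | ∃ j : ℕ, x = i * 2 ^ j % n}

/-- The coset leader (smallest element) of the 2-cyclotomic coset of `i` modulo `n`. -/
noncomputable def cosetLeader (n i : ℕ) : ℕ := sInf (cycCoset n i)

open Polynomial in
lemma aux_adjoin {F : Type} [Field F] [Algebra (ZMod 2) F] [Finite F] (s : ℕ)
    (hF : Module.finrank (ZMod 2) F = 2 * s) (γ : F) (hγ : 2 ^ s < orderOf γ) (a : F) :
    ∃ p : (ZMod 2)[X], aeval γ p = a := by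
  have : FiniteDimensional (ZMod 2) F := Module.Finite.of_finite
  let K := IntermediateField.adjoin (ZMod 2) {γ}
  have hγK : γ ∈ K := IntermediateField.mem_adjoin_simple_self _ _
  have h1 : orderOf γ ≤ Nat.card K := by
    have : orderOf γ = orderOf (⟨γ, hγK⟩ : K) :=
      orderOf_injective (algebraMap K F).toMonoidHom (algebraMap K F).injective ⟨γ, hγK⟩
    rw [this]
    exact orderOf_le_card
  have h2 : Nat.card K = 2 ^ Module.finrank (ZMod 2) K := by
    rw [Module.natCard_eq_pow_finrank (K := ZMod 2)]; simp
  have h3 : s < Module.finrank (ZMod 2) K := by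
    have : 2 ^ s < 2 ^ Module.finrank (ZMod 2) K := by omega
    exact (Nat.pow_lt_pow_iff_right (by norm_num)).1 this
  have h4 := Module.finrank_mul_finrank (ZMod 2) K F
  rw [hF] at h4
  have h5 : 0 < Module.finrank K F := Module.finrank_pos
  have h6 : Module.finrank K F = 1 := by
    by_contra h
    have : 2 ≤ Module.finrank K F := by omega
    nlinarith
  have h7 : K = ⊤ := by
    rw [h6, mul_one] at h4
    apply IntermediateField.toSubalgebra_injective
    apply Subalgebra.toSubmodule_injective
    have := Submodule.eq_top_of_finrank_eq (K := ZMod 2) (V := F)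
      (S := Subalgebra.toSubmodule K.toSubalgebra) (by rw [hF]; exact h4)
    rw [this]; simp
  have h8 : a ∈ K.toSubalgebra := by rw [h7]; trivial
  rw [IntermediateField.adjoin_simple_toSubalgebra_of_isAlgebraic (IsAlgebraic.of_finite _ _),
    Algebra.adjoin_singleton_eq_range_aeval] at h8
  exact h8

lemma aux_arith (s n j : ℕ) (hs : 4 ≤ s) (hn : 3 * n + 1 = 2 ^ (2 * s)) (hj : j < 2 * s)
    (h : 2 ^ j ≡ 3 [MOD n]) : False := by
  obtain ⟨t, rfl⟩ : ∃ t, s = t + 4 := ⟨s - 4, by omega⟩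
  have e : 2 ^ (2 * (t + 4)) = 256 * 2 ^ (2 * t) := by rw [mul_add, pow_add]; ring
  have hp : 1 ≤ 2 ^ (2 * t) := Nat.one_le_two_pow
  have hjle : 2 * 2 ^ j ≤ 2 ^ (2 * (t + 4)) := by
    rw [← pow_succ']; exact Nat.pow_le_pow_right (by norm_num) hj
  have hlt : 2 ^ j < 2 * n := by omega
  have h3 : 3 % n = 3 := Nat.mod_eq_of_lt (by omega)
  unfold Nat.ModEq at h
  rw [h3] at h
  have hd := Nat.div_add_mod (2 ^ j) n
  rw [h] at hd
  have hq : 2 ^ j / n < 2 := Nat.div_lt_of_lt_mul (by omega)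
  have hcase : 2 ^ j = 3 ∨ 2 ^ j = n + 3 := by
    generalize 2 ^ j / n = q at *
    interval_cases q <;> omega
  have hodd : j = 0 ∨ j = 1 ∨ j = 2 ∨ j = 3 ∨ 4 ≤ j := by omega
  rcases hodd with rfl | rfl | rfl | rfl | h4
  · omega
  · omega
  · omega
  · omega
  · obtain ⟨k, rfl⟩ : ∃ k, j = k + 4 := ⟨j - 4, by omega⟩
    rw [pow_add] at hcase
    omega

open Polynomial in
lemma aux_coprime {F : Type} [Field F] [Algebra (ZMod 2) F] [Finite F] (s n : ℕ) (hs : 4 ≤ s)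
    (hn : 3 * n + 1 = 2 ^ (2 * s))
    (hF : Module.finrank (ZMod 2) F = 2 * s) (β : F) (hβ : orderOf β = n) :
    IsCoprime (minpoly (ZMod 2) β) (minpoly (ZMod 2) (β ^ 3)) := by
  have : FiniteDimensional (ZMod 2) F := Module.Finite.of_finite
  have i3 : Irreducible (minpoly (ZMod 2) (β ^ 3)) := minpoly.irreducible (IsIntegral.of_finite _ _)
  rcases EuclideanDomain.dvd_or_coprime _ (minpoly (ZMod 2) β) i3 with h | h
  swap
  · exact h.symm
  exfalso
  have h0 : aeval (β ^ 3) (minpoly (ZMod 2) β) = 0 :=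
    aeval_eq_zero_of_dvd_aeval_eq_zero h (minpoly.aeval _ _)
  obtain ⟨σ, hσ⟩ := minpoly.exists_algEquiv_of_root' (IsAlgebraic.of_finite (ZMod 2) β) h0
  obtain ⟨j, rfl⟩ := (FiniteField.bijective_frobeniusAlgEquivOfAlgebraic_pow (ZMod 2) F).2 σ
  simp only [AlgEquiv.coe_pow, FiniteField.coe_frobeniusAlgEquivOfAlgebraic_iterate, ZMod.card]
    at hσ
  have hj : (j : ℕ) < 2 * s := j.2.trans_eq hF
  refine aux_arith s n j hs hn hj ?_
  rw [← hβ]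
  have hβ0 : 0 < orderOf β := by
    rw [hβ]
    have : 2 ^ 2 ≤ 2 ^ (2 * s) := Nat.pow_le_pow_right (by norm_num) (by omega)
    omega
  exact (IsOfFinOrder.pow_eq_pow_iff_modEq (orderOf_pos_iff.1 hβ0)).1 hσ

def bchMap {F : Type} [Field F] [Algebra (ZMod 2) F] (n : ℕ) (β : F) :
    (Fin n → ZMod 2) →ₗ[ZMod 2] F × F :=
  LinearMap.prod (Fintype.linearCombination (ZMod 2) (fun i : Fin n => β ^ (1 * (i : ℕ))))
    (Fintype.linearCombination (ZMod 2) (fun i : Fin n => β ^ (3 * (i : ℕ))))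

lemma bch_eq_ker {F : Type} [Field F] [Algebra (ZMod 2) F] (n : ℕ) (β : F) :
    BCHCode n β {1, 3} = LinearMap.ker (bchMap n β) := by
  ext c
  change (∀ j ∈ ({1, 3} : Finset ℕ), _) ↔ _
  simp [bchMap, Fintype.linearCombination_apply]

lemma aux_size (s n : ℕ) (hs : 4 ≤ s) (hn : 3 * n + 1 = 2 ^ (2 * s)) :
    3 * 2 ^ s < n ∧ 4 * s < n ∧ 85 ≤ n := by
  have h1 : 16 ≤ 2 ^ s := by
    calc 16 = 2 ^ 4 := by norm_num
      _ ≤ _ := Nat.pow_le_pow_right (by norm_num) hs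
  have h2 : s < 2 ^ s := Nat.lt_two_pow_self
  have h3 : 2 ^ (2 * s) = 2 ^ s * 2 ^ s := by rw [two_mul, pow_add]
  rw [h3] at hn
  have h4 : 3 * 2 ^ s < n := by nlinarith
  refine ⟨h4, ?_, ?_⟩
  · nlinarith
  · nlinarith

open Polynomial in
lemma bch_surj {F : Type} [Field F] [Algebra (ZMod 2) F] [Finite F] (s n : ℕ) (hs : 4 ≤ s)
    (hn : 3 * n + 1 = 2 ^ (2 * s))
    (hF : Module.finrank (ZMod 2) F = 2 * s) (β : F) (hβ : orderOf β = n) :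
    Function.Surjective (bchMap n β) := by
  obtain ⟨hz1, hz2, hz3⟩ := aux_size s n hs hn
  rintro ⟨a, b⟩
  obtain ⟨p1, hp1⟩ := aux_adjoin s hF β (by omega) a
  have ho : 2 ^ s < orderOf (β ^ 3) := by
    rw [orderOf_pow' _ (by norm_num), hβ]
    have hg : Nat.gcd n 3 ≤ 3 := Nat.gcd_le_right _ (by norm_num)
    have h3 : n / 3 ≤ n / Nat.gcd n 3 :=
      Nat.div_le_div_left hg (Nat.gcd_pos_of_pos_right _ (by norm_num))
    have : 2 ^ s < n := by omega
    by_contra hcon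
    have h5 : n / 3 = 2 ^ s := by omega
    have h2 : 2 ^ (2 * s) = 2 ^ s * 2 ^ s := by rw [two_mul, pow_add]
    have h6 : 16 ≤ 2 ^ s := by
      calc 16 = 2 ^ 4 := by norm_num
        _ ≤ _ := Nat.pow_le_pow_right (by norm_num) hs
    have : n ≤ 3 * 2 ^ s + 2 := by omega
    nlinarith
  obtain ⟨p2, hp2⟩ := aux_adjoin s hF (β ^ 3) ho b
  obtain ⟨u, v, huv⟩ := aux_coprime s n hs hn hF β hβ
  set m1 := minpoly (ZMod 2) β with hm1
  set m3 := minpoly (ZMod 2) (β ^ 3) with hm3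
  let p := p1 * (v * m3) + p2 * (u * m1)
  have e1 : aeval β m1 = 0 := minpoly.aeval _ _
  have e3 : aeval (β ^ 3) m3 = 0 := minpoly.aeval _ _
  have f1 : aeval β v * aeval β m3 = 1 := by
    have := congrArg (aeval β) huv
    simpa [e1] using this
  have f3 : aeval (β ^ 3) u * aeval (β ^ 3) m1 = 1 := by
    have := congrArg (aeval (β ^ 3)) huv
    simpa [e3] using this
  have g1 : aeval β p = a := by simp [p, e1, f1, hp1]
  have g3 : aeval (β ^ 3) p = b := by simp [p, e3, f3, hp2]
  have hn0 : n ≠ 0 := by omega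
  have hmon : (X ^ n - 1 : (ZMod 2)[X]).Monic := by
    simpa using monic_X_pow_sub_C (1 : ZMod 2) hn0
  have hβn : β ^ n = 1 := by rw [← hβ]; exact pow_orderOf_eq_one β
  let r := p %ₘ (X ^ n - 1)
  have r1 : aeval β r = a := by
    rw [← g1]; exact aeval_modByMonic_eq_self_of_root (by simp [hβn])
  have r3 : aeval (β ^ 3) r = b := by
    rw [← g3]
    refine aeval_modByMonic_eq_self_of_root ?_
    simp [← pow_mul, mul_comm 3 n]
    simp [pow_mul, hβn]
  have hdeg : r.natDegree < n := by
    have h := natDegree_modByMonic_lt p hmon (by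
      intro h
      have := congrArg natDegree h
      have h' := natDegree_X_pow_sub_C (n := n) (r := (1 : ZMod 2))
      simp at h' this
      omega)
    have h' := natDegree_X_pow_sub_C (n := n) (r := (1 : ZMod 2))
    simp at h'
    rwa [h'] at h
  refine ⟨fun i => r.coeff i, ?_⟩
  rw [aeval_eq_sum_range' hdeg] at r1 r3
  rw [Finset.sum_range] at r1 r3
  refine Prod.ext ?_ ?_
  · simpa [bchMap, Fintype.linearCombination_apply] using r1
  · simpa [bchMap, Fintype.linearCombination_apply, pow_mul] using r3

lemma bch_finrank {F : Type} [Field F] [Algebra (ZMod 2) F] [Finite F] (s n : ℕ) (hs : 4 ≤ s)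
    (hn : 3 * n + 1 = 2 ^ (2 * s))
    (hF : Module.finrank (ZMod 2) F = 2 * s) (β : F) (hβ : orderOf β = n) :
    Module.finrank (ZMod 2) (BCHCode n β {1, 3}) = n - 4 * s := by
  have : FiniteDimensional (ZMod 2) F := Module.Finite.of_finite
  rw [bch_eq_ker]
  have h := LinearMap.finrank_range_add_finrank_ker (bchMap n β)
  rw [LinearMap.range_eq_top.2 (bch_surj s n hs hn hF β hβ), finrank_top,
    Module.finrank_prod, hF] at h
  simp at h
  omega

lemma aux_small {F : Type} [Field F] [CharP F 2] (T : Finset F) (h0 : (0 : F) ∉ T)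
    (hc : T.card ≤ 4) (h1 : ∑ x ∈ T, x = 0) (h3 : ∑ x ∈ T, x ^ 3 = 0) : T = ∅ := by
  classical
  have h2 : (2 : F) = 0 := CharTwo.two_eq_zero
  have hcases : T.card = 0 ∨ T.card = 1 ∨ T.card = 2 ∨ T.card = 3 ∨ T.card = 4 := by omega
  rcases hcases with h | h | h | h | h
  · exact Finset.card_eq_zero.1 h
  · obtain ⟨a, rfl⟩ := Finset.card_eq_one.1 h
    simp_all
  · obtain ⟨a, b, hab, rfl⟩ := Finset.card_eq_two.1 h
    rw [Finset.sum_pair hab] at h1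
    exact absurd (CharTwo.add_eq_zero.1 h1) hab
  · obtain ⟨a, b, c, hab, hac, hbc, rfl⟩ := Finset.card_eq_three.1 h
    exfalso
    have ea : a ≠ 0 := by rintro rfl; simp at h0
    have eb : b ≠ 0 := by rintro rfl; simp at h0
    have ec : c ≠ 0 := by rintro rfl; simp at h0
    have hs : ∀ f : F → F, ∑ x ∈ {a, b, c}, f x = f a + (f b + f c) := by
      intro f
      rw [Finset.sum_insert (by simp [hab, hac]), Finset.sum_pair hbc]
    rw [hs] at h1 h3
    have : a * b * c = 0 := by
      linear_combination h3 - (a ^ 2 + b ^ 2 + c ^ 2 - a * b - a * c - b * c) * h1 - a * b * c * h2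
    simp_all
  · obtain ⟨d, T', hd, rfl, hT'⟩ := Finset.card_eq_succ.1 h
    obtain ⟨a, b, c, hab, hac, hbc, rfl⟩ := Finset.card_eq_three.1 hT'
    exfalso
    have hs : ∀ f : F → F, ∑ x ∈ insert d {a, b, c}, f x = f d + (f a + (f b + f c)) := by
      intro f
      rw [Finset.sum_insert hd, Finset.sum_insert (by simp [hab, hac]), Finset.sum_pair hbc]
    rw [hs] at h1 h3
    have hd' : d = a + b + c := by
      linear_combination h1 - (a + b + c) * h2
    subst hd'
    have : (a + b) * (a + c) * (b + c) = 0 := by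
      linear_combination h3 - (a ^ 3 + b ^ 3 + c ^ 3 + (a + b) * (a + c) * (b + c)) * h2
    rcases mul_eq_zero.1 this with h | h
    · rcases mul_eq_zero.1 h with h | h
      · exact hab (CharTwo.add_eq_zero.1 h)
      · exact hac (CharTwo.add_eq_zero.1 h)
    · exact hbc (CharTwo.add_eq_zero.1 h)

lemma zmod2_ne {x : ZMod 2} (h : x ≠ 0) : x = 1 := by
  revert x; decide

lemma bch_weight {F : Type} [Field F] [Algebra (ZMod 2) F] [Finite F] (n : ℕ) (hn : 0 < n)
    (β : F) (hβ : orderOf β = n) (c : Fin n → ZMod 2) (hc : c ∈ BCHCode n β {1, 3})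
    (hc0 : c ≠ 0) : 5 ≤ hammingNorm c := by
  classical
  have : CharP F 2 := charP_of_injective_algebraMap (algebraMap (ZMod 2) F).injective 2
  by_contra hlt
  let S : Finset (Fin n) := Finset.univ.filter (fun i => c i ≠ 0)
  have hS : S.card ≤ 4 := by
    have : S.card = hammingNorm c := rfl
    omega
  have hinj : Function.Injective (fun i : Fin n => β ^ (i : ℕ)) := by
    intro i j hij
    apply Fin.ext
    exact pow_injOn_Iio_orderOf (x := β) (by simp [hβ]) (by simp [hβ]) hij
  have hβ0 : β ≠ 0 := by
    rintro rfl
    rw [orderOf_zero] at hβ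
    omega
  have key : ∀ f : Fin n → F, ∑ i, c i • f i = ∑ i ∈ S, f i := by
    intro f
    rw [Finset.sum_filter]
    refine Finset.sum_congr rfl fun i _ => ?_
    by_cases h : c i = 0
    · simp [h]
    · simp [zmod2_ne h]
  have h1 := hc 1 (by simp)
  have h3 := hc 3 (by simp)
  rw [key] at h1 h3
  have hT := aux_small (S.image (fun i : Fin n => β ^ (i : ℕ))) (by simp [hβ0])
    (Finset.card_image_le.trans hS)
    (by rw [Finset.sum_image (fun _ _ _ _ h => hinj h)]; simpa using h1)
    (by
      rw [Finset.sum_image (fun _ _ _ _ h => hinj h)]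
      simpa [← pow_mul, mul_comm] using h3)
  rw [Finset.image_eq_empty] at hT
  apply hc0
  funext i
  by_contra h
  have : i ∈ S := by simp [S]; exact h
  rw [hT] at this
  simp at this

lemma le_minDist {N d : ℕ} (C : Submodule (ZMod 2) (Fin N → ZMod 2))
    (hC : ∃ c ∈ C, c ≠ 0) (h : ∀ c ∈ C, c ≠ 0 → d ≤ hammingNorm c) : d ≤ minDist C := by
  apply le_csInf
  · obtain ⟨c, h1, h2⟩ := hC
    exact ⟨_, c, h1, h2, rfl⟩
  · rintro w ⟨c, h1, h2, rfl⟩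
    exact h c h1 h2

lemma minDist_le {N : ℕ} (C : Submodule (ZMod 2) (Fin N → ZMod 2)) (c : Fin N → ZMod 2)
    (h : c ∈ C) (h0 : c ≠ 0) : minDist C ≤ hammingNorm c :=
  Nat.sInf_le ⟨c, h, h0, rfl⟩

lemma exists_minDist {N : ℕ} (C : Submodule (ZMod 2) (Fin N → ZMod 2))
    (hC : ∃ c ∈ C, c ≠ 0) : ∃ c ∈ C, c ≠ 0 ∧ hammingNorm c = minDist C := by
  obtain ⟨c, h1, h2⟩ := hC
  exact Nat.sInf_mem (s := {w | ∃ c ∈ C, c ≠ 0 ∧ hammingNorm c = w}) ⟨_, c, h1, h2, rfl⟩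

def indVec {N : ℕ} (S : Finset (Fin N)) : Fin N → ZMod 2 := fun i => if i ∈ S then 1 else 0

lemma indVec_inj {N : ℕ} : Function.Injective (indVec (N := N)) := by
  intro S T h
  ext i
  have := congrFun h i
  simp only [indVec] at this
  by_cases h1 : i ∈ S <;> by_cases h2 : i ∈ T <;> simp_all

lemma indVec_norm {N : ℕ} (S T : Finset (Fin N)) :
    hammingNorm (indVec S - indVec T) ≤ S.card + T.card := by
  classical
  refine le_trans (Finset.card_le_card ?_) (Finset.card_union_le S T)
  intro i
  rw [Finset.mem_filter, Finset.mem_union]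
  rintro ⟨-, h⟩
  by_contra hcon
  push Not at hcon
  simp [indVec, hcon] at h

lemma sphere_pack {N : ℕ} (C : Submodule (ZMod 2) (Fin N → ZMod 2)) (h : 7 ≤ minDist C) :
    2 ^ Module.finrank (ZMod 2) C * N.choose 3 ≤ 2 ^ N := by
  classical
  let P : Type := {S : Finset (Fin N) // S ∈ Finset.powersetCard 3 Finset.univ}
  let f : C × P → (Fin N → ZMod 2) := fun x => x.1.1 + indVec x.2.1
  have hf : Function.Injective f := by
    rintro ⟨⟨c, hc⟩, ⟨S, hS⟩⟩ ⟨⟨c', hc'⟩, ⟨T, hT⟩⟩ hxy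
    have hxy' : c + indVec S = c' + indVec T := hxy
    rw [Finset.mem_powersetCard] at hS hT
    have hd : c' - c = indVec S - indVec T := by
      rw [sub_eq_sub_iff_add_eq_add, add_comm (indVec S), hxy']
    have hcc : c' - c = 0 := by
      by_contra h0
      have h1 := minDist_le C (c' - c) (C.sub_mem hc' hc) h0
      have h2 := indVec_norm S T
      rw [← hd] at h2
      omega
    have e1 : c = c' := (sub_eq_zero.1 hcc).symm
    rw [hcc] at hd
    have e2 : S = T := indVec_inj (sub_eq_zero.1 hd.symm)
    subst e1 e2
    rfl
  have hcard := Nat.card_le_card_of_injective f hf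
  rw [Nat.card_prod, Module.natCard_eq_pow_finrank (K := ZMod 2) (V := C)] at hcard
  have hP : Nat.card P = N.choose 3 := by
    rw [Nat.card_eq_fintype_card, Fintype.card_coe, Finset.card_powersetCard]
    simp
  rw [hP] at hcard
  simpa using hcard

lemma extendMap_inj (N : ℕ) : Function.Injective (extendMap N) := by
  intro a b h
  funext i
  have := congrFun h i.castSucc
  simpa [extendMap] using this

lemma sum_eq_norm {N : ℕ} (c : Fin N → ZMod 2) : ∑ i, c i = (hammingNorm c : ZMod 2) := by
  classical
  have : (hammingNorm c : ZMod 2) = ∑ i, if c i ≠ 0 then 1 else 0 := by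
    rw [Finset.sum_boole]; rfl
  rw [this]
  refine Finset.sum_congr rfl fun i _ => ?_
  by_cases h : c i = 0
  · simp [h]
  · simp [zmod2_ne h]

lemma ext_norm {N : ℕ} (c : Fin N → ZMod 2) :
    hammingNorm (extendMap N c) = hammingNorm c + hammingNorm c % 2 := by
  classical
  have h : hammingNorm (extendMap N c) =
      ∑ i, if extendMap N c i ≠ 0 then 1 else 0 := by
    rw [Finset.sum_boole]; rfl
  have h' : hammingNorm c = ∑ i, if c i ≠ 0 then 1 else 0 := by
    rw [Finset.sum_boole]; rfl
  have hl : extendMap N c (Fin.last N) = (hammingNorm c : ZMod 2) := by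
    rw [← sum_eq_norm]; simp [extendMap]
  have hi : ∀ i : Fin N, extendMap N c i.castSucc = c i := by
    intro i; simp [extendMap]
  rw [h, Fin.sum_univ_castSucc, hl]
  simp only [hi]
  rw [← h']
  congr 1
  rcases Nat.mod_two_eq_zero_or_one (hammingNorm c) with h2 | h2
  · have : (hammingNorm c : ZMod 2) = 0 := by
      rw [ZMod.natCast_eq_zero_iff]; omega
    simp [this, h2]
  · have : (hammingNorm c : ZMod 2) ≠ 0 := by
      rw [Ne, ZMod.natCast_eq_zero_iff]; omega
    simp [this, h2]

lemma choose3 (N : ℕ) : 6 * (N + 2).choose 3 = (N + 2) * (N + 1) * N := by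
  have h := Nat.descFactorial_eq_factorial_mul_choose (N + 2) 3
  simp [Nat.descFactorial, Nat.factorial] at h
  rw [← h]; ring

lemma bound1 (n : ℕ) (hn : 85 ≤ n) : (3 * n + 1) ^ 2 < n.choose 3 := by
  obtain ⟨k, rfl⟩ : ∃ k, n = k + 85 := ⟨n - 85, by omega⟩
  have := choose3 (k + 83)
  rw [show k + 83 + 2 = k + 85 by omega] at this
  nlinarith [Nat.zero_le (k ^ 3), Nat.zero_le (k ^ 2)]

lemma bound2 (n : ℕ) (hn : 341 ≤ n) : 2 * (3 * n + 1) ^ 2 < (n + 1).choose 3 := by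
  obtain ⟨k, rfl⟩ : ∃ k, n = k + 341 := ⟨n - 341, by omega⟩
  have := choose3 (k + 340)
  rw [show k + 340 + 2 = k + 341 + 1 by omega] at this
  nlinarith [Nat.zero_le (k ^ 3), Nat.zero_le (k ^ 2)]

theorem stmt_17 (s : ℕ) (hs : 4 ≤ s) (n : ℕ) (hn : n = (4 ^ s - 1) / 3)
    (α : GaloisField 2 (2 * s)) (hα : orderOf α = 2 ^ (2 * s) - 1)
    (β : GaloisField 2 (2 * s)) (hβ : β = α ^ (3)) :
    Module.finrank (ZMod 2) (BCHCode n β {1, 3}) = n - 4 * s ∧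
    5 ≤ minDist (BCHCode n β {1, 3}) ∧
    minDist (BCHCode n β {1, 3}) ≤ 6 ∧
    Module.finrank (ZMod 2) (extendedCode (BCHCode n β {1, 3})) = n - 4 * s ∧
    minDist (extendedCode (BCHCode n β {1, 3})) = 6 ∧
    (5 ≤ s →
      ∀ D : Submodule (ZMod 2) (Fin (n + 1) → ZMod 2),
        Module.finrank (ZMod 2) D = n - 4 * s → minDist D ≤ 6) := by
  have h4 : (4 : ℕ) ^ s = 2 ^ (2 * s) := by rw [pow_mul]; norm_num
  have hdvd : 3 ∣ 4 ^ s - 1 := by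
    simpa using Nat.sub_dvd_pow_sub_pow 4 1 s
  have hpos : 1 ≤ 4 ^ s := Nat.one_le_pow _ _ (by norm_num)
  have hn' : 3 * n + 1 = 2 ^ (2 * s) := by omega
  have hF : Module.finrank (ZMod 2) (GaloisField 2 (2 * s)) = 2 * s :=
    GaloisField.finrank 2 (by omega)
  have hord : orderOf β = n := by
    have e : orderOf α = 3 * n := by omega
    rw [hβ, orderOf_pow' _ (by norm_num), e, Nat.gcd_eq_right (dvd_mul_right 3 n)]
    omega
  obtain ⟨hz1, hz2, hz3⟩ := aux_size s n hs hn'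
  have hrank := bch_finrank s n hs hn' hF β hord
  set C := BCHCode n β {1, 3} with hCdef
  have hCne : ∃ c ∈ C, c ≠ 0 := by
    apply Submodule.exists_mem_ne_zero_of_ne_bot
    intro hbot
    rw [hbot, finrank_bot] at hrank
    omega
  have hw : ∀ c ∈ C, c ≠ 0 → 5 ≤ hammingNorm c := fun c hc hc0 =>
    bch_weight n (by omega) β hord c hc hc0
  have h5 : 5 ≤ minDist C := le_minDist C hCne hw
  have hq : (2 : ℕ) ^ (4 * s) = (3 * n + 1) ^ 2 := by
    rw [hn', ← pow_mul]; congr 1; ring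
  have h6 : minDist C ≤ 6 := by
    by_contra hcon
    have h := sphere_pack C (by omega)
    rw [hrank] at h
    have e : 2 ^ n = 2 ^ (n - 4 * s) * 2 ^ (4 * s) := by rw [← pow_add]; congr 1; omega
    rw [e] at h
    have h' := Nat.le_of_mul_le_mul_left h (by positivity)
    have := bound1 n hz3
    omega
  refine ⟨hrank, h5, h6, ?_, ?_, ?_⟩
  · rw [← hrank]
    exact (Submodule.equivMapOfInjective (extendMap n) (extendMap_inj n) C).finrank_eq.symm
  · have hne : ∀ c, c ≠ 0 → extendMap n c ≠ 0 := fun c hc h =>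
      hc (extendMap_inj n (by rw [h, map_zero]))
    obtain ⟨c, hc, hc0, hcm⟩ := exists_minDist C hCne
    apply le_antisymm
    · have := minDist_le (extendedCode C) (extendMap n c) (Submodule.mem_map_of_mem hc) (hne c hc0)
      rw [ext_norm] at this
      omega
    · apply le_minDist _ ⟨extendMap n c, Submodule.mem_map_of_mem hc, hne c hc0⟩
      rintro _ ⟨b, hb, rfl⟩ hb0
      have hb1 : b ≠ 0 := by rintro rfl; simp at hb0
      have := hw b hb hb1
      rw [ext_norm]
      omega
  · intro hs5 D hD
    by_contra hcon
    have h := sphere_pack D (by omega)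
    rw [hD] at h
    have e : 2 ^ (n + 1) = 2 ^ (n - 4 * s) * (2 * 2 ^ (4 * s)) := by
      rw [← pow_succ', ← pow_add]; congr 1; omega
    rw [e] at h
    have h' := Nat.le_of_mul_le_mul_left h (by positivity)
    have h1024 : 2 ^ 10 ≤ 2 ^ (2 * s) := Nat.pow_le_pow_right (by norm_num) (by omega)
    have := bound2 n (by omega)
    omega
end

section
/- Let s ≥ 3 be an integer, let λ be a divisor of 2^s−1 with λ < 2^{⌊s/2⌋}, and let n = (2^s−1)/λ. Then: (i) the multiplicative order of 2 modulo n equals s; (ii) for every odd integer i with 1 ≤ i ≤ 2^{⌈s/2⌉}/λ, the 2-cyclotomic coset C_i modulo n has cardinality s; and (iii) every such odd i is the coset leader of its 2-cyclotomic coset C_i. -/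
open Finset

theorem aux_key (s a j : ℕ) (hs : 3 ≤ s) (ha : Odd a) (hlt : a < 2 ^ ((s + 1) / 2))
    (hj0 : 0 < j) (hjs : j < s) : a < a * 2 ^ j % (2 ^ s - 1) := by
  have hPQ : 2 ^ j * 2 ^ (s - j) = 2 ^ s := by
    rw [← pow_add]; congr 1; omega
  have hQe : Even (2 ^ (s - j)) := (even_two).pow_of_ne_zero (by omega)
  have hQpos : 0 < 2 ^ (s - j) := by positivity
  have hP2 : 2 ≤ 2 ^ j := by
    calc 2 = 2 ^ 1 := by norm_num
      _ ≤ 2 ^ j := Nat.pow_le_pow_right (by norm_num) hj0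
  have hQ2 : 2 ≤ 2 ^ (s - j) := by
    calc 2 = 2 ^ 1 := by norm_num
      _ ≤ 2 ^ (s - j) := Nat.pow_le_pow_right (by norm_num) (by omega)
  have hcase : a < 2 ^ (s - j) ∨ a < 2 ^ j := by
    by_cases h : j < (s + 1) / 2
    · left
      exact lt_of_lt_of_le hlt (Nat.pow_le_pow_right (by norm_num) (by omega))
    · right
      exact lt_of_lt_of_le hlt (Nat.pow_le_pow_right (by norm_num) (by omega))
  generalize 2 ^ j = P at *
  generalize 2 ^ (s - j) = Q at *
  have hdm := Nat.div_add_mod a Q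
  have hrlt := Nat.mod_lt a hQpos
  have hr1 : 1 ≤ a % Q := by
    by_contra h0
    have h0 : a % Q = 0 := by omega
    have : Q ∣ a := Nat.dvd_of_mod_eq_zero h0
    have h2 : 2 ∣ a := (even_iff_two_dvd.mp hQe).trans this
    rcases ha with ⟨k, hk⟩
    omega
  have hq0 : a < Q → a / Q = 0 := fun h => Nat.div_eq_of_lt h
  generalize a / Q = q at *
  generalize a % Q = r at *
  have hrP : P ≤ r * P := Nat.le_mul_of_pos_left P hr1
  have hrP2 : r * P + P ≤ P * Q := by nlinarith
  have hqP : q + 1 < P := by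
    rcases hcase with h | h
    · have := hq0 h; omega
    · have : 2 * q ≤ Q * q := Nat.mul_le_mul_right q hQ2
      omega
  have hagt : a < q + r * P := by
    rcases hcase with h | h
    · have h0 := hq0 h
      subst h0
      have : a = r := by omega
      subst this
      nlinarith
    · omega
  have hpos : 1 ≤ P * Q := Nat.mul_pos (by omega) hQpos
  have hmod : a * P = (q + r * P) + (2 ^ s - 1) * q := by
    rw [← hPQ]
    zify [hpos]
    have : (a : ℤ) = Q * q + r := by exact_mod_cast hdm.symm
    rw [this]; ring
  rw [hmod, Nat.add_mul_mod_self_left, Nat.mod_eq_of_lt (by rw [← hPQ]; omega)]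
  exact hagt

theorem stmt_18 (s : ℕ) (hs : 3 ≤ s) (lam : ℕ) (hdvd : lam ∣ 2 ^ s - 1)
    (hlt : lam < 2 ^ (s / 2)) (n : ℕ) (hn : n = (2 ^ s - 1) / lam) :
    orderOf (2 : ZMod n) = s ∧
    ∀ i : ℕ, Odd i → 1 ≤ i → i ≤ 2 ^ ((s + 1) / 2) / lam →
      (cycCoset n i).ncard = s ∧ cosetLeader n i = i := by
  have h2s : 8 ≤ 2 ^ s := by
    calc 8 = 2 ^ 3 := by norm_num
      _ ≤ 2 ^ s := Nat.pow_le_pow_right (by norm_num) hs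
  have hmul : n * lam = 2 ^ s - 1 := by rw [hn]; exact Nat.div_mul_cancel hdvd
  have hlam0 : 0 < lam := by
    rcases Nat.eq_zero_or_pos lam with h | h
    · rw [h] at hmul; omega
    · exact h
  have hse : Even (2 ^ s) := even_two.pow_of_ne_zero (by omega)
  have hNodd : Odd (n * lam) := by
    rw [hmul]; exact Nat.Even.sub_odd (by omega) hse odd_one
  have hnodd : Odd n := (Nat.odd_mul.mp hNodd).1
  have hlodd : Odd lam := (Nat.odd_mul.mp hNodd).2
  have hcop : Nat.Coprime 2 n := Nat.coprime_two_left.mpr hnodd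
  have hhe : Even (2 ^ ((s + 1) / 2)) := even_two.pow_of_ne_zero (by omega)
  have hlb : ∀ i, Odd i → i * lam ≤ 2 ^ ((s + 1) / 2) → i * lam < 2 ^ ((s + 1) / 2) := by
    intro i hi hle
    refine lt_of_le_of_ne hle fun he => ?_
    have := hi.mul hlodd
    rw [he] at this
    exact (Nat.not_even_iff_odd.mpr this) hhe
  have key : ∀ i, Odd i → i * lam ≤ 2 ^ ((s + 1) / 2) → ∀ j, 0 < j → j < s →
      i < i * 2 ^ j % n := by
    intro i hi hle j hj0 hjs
    have h := aux_key s (i * lam) j hs (hi.mul hlodd) (hlb i hi hle) hj0 hjs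
    rw [← hmul, show i * lam * 2 ^ j = (i * 2 ^ j) * lam by ring, Nat.mul_mod_mul_right] at h
    exact lt_of_mul_lt_mul_right h (Nat.zero_le _)
  have hone : 1 * lam ≤ 2 ^ ((s + 1) / 2) := by
    rw [one_mul]
    exact hlt.le.trans (Nat.pow_le_pow_right (by norm_num) (by omega))
  have hper : 2 ^ s ≡ 1 [MOD n] := by
    have : n ∣ 2 ^ s - 1 := ⟨lam, hmul.symm⟩
    exact ((Nat.modEq_iff_dvd' (by omega)).mpr this).symm
  refine ⟨?_, ?_⟩
  · rw [orderOf_eq_iff (by omega)]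
    refine ⟨?_, ?_⟩
    · have := (ZMod.natCast_eq_natCast_iff _ _ _).mpr hper
      simpa using this
    · intro m hm hm0 h
      have h' : 2 ^ m ≡ 1 [MOD n] := by
        rw [← ZMod.natCast_eq_natCast_iff]; simpa using h
      have h1 := key 1 odd_one hone m hm0 hm
      rw [one_mul, h'] at h1
      have := Nat.mod_le 1 n
      omega
  · intro i hi hi1 hile
    have hle : i * lam ≤ 2 ^ ((s + 1) / 2) := (Nat.le_div_iff_mul_le hlam0).mp hile
    have hin : i < n := by
      have h1 := hlb i hi hle
      have h2 : 2 ^ ((s + 1) / 2) * 2 ≤ 2 ^ s := by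
        rw [← pow_succ]; exact Nat.pow_le_pow_right (by norm_num) (by omega)
      have h3 : i * lam < n * lam := by rw [hmul]; omega
      exact lt_of_mul_lt_mul_right h3 (Nat.zero_le _)
    have hred : ∀ j, i * 2 ^ j % n = i * 2 ^ (j % s) % n := by
      intro j
      have h : 2 ^ j ≡ 2 ^ (j % s) [MOD n] := by
        conv_lhs => rw [← Nat.mod_add_div j s, pow_add, pow_mul]
        simpa using (Nat.ModEq.refl (2 ^ (j % s))).mul (hper.pow (j / s))
      exact h.mul_left i
    refine ⟨?_, ?_⟩
    · have himg : cycCoset n i = ((Finset.range s).image (fun j => i * 2 ^ j % n) : Finset ℕ) := by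
        ext x
        simp only [cycCoset, Set.mem_setOf_eq, Finset.coe_image, Set.mem_image, Finset.mem_coe,
          Finset.mem_range]
        constructor
        · rintro ⟨j, rfl⟩
          exact ⟨j % s, Nat.mod_lt _ (by omega), (hred j).symm⟩
        · rintro ⟨j, -, rfl⟩
          exact ⟨j, rfl⟩
      have hne : ∀ j k, j < k → k < s → i * 2 ^ j % n ≠ i * 2 ^ k % n := by
        intro j k hjk hk he
        have h1 : 2 ^ j * i ≡ 2 ^ j * (i * 2 ^ (k - j)) [MOD n] := by
          have : 2 ^ j * (i * 2 ^ (k - j)) = i * 2 ^ k := by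
            rw [mul_left_comm, ← pow_add]; congr 2; omega
          rw [this, mul_comm]; exact he
        have h2 : i ≡ i * 2 ^ (k - j) [MOD n] :=
          Nat.ModEq.cancel_left_of_coprime (hcop.pow_left j).symm h1
        have h3 := key i hi hle (k - j) (by omega) (by omega)
        rw [← h2] at h3
        have := Nat.mod_le i n
        omega
      rw [himg, Set.ncard_coe_finset, Finset.card_image_of_injOn, Finset.card_range]
      intro j hj k hk he
      simp only [Finset.coe_range, Set.mem_Iio] at hj hk
      rcases lt_trichotomy j k with h | h | h
      · exact absurd he (hne j k h hk)
      · exact h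
      · exact absurd he.symm (hne k j h hj)
    · apply le_antisymm
      · exact Nat.sInf_le ⟨0, by simp [Nat.mod_eq_of_lt hin]⟩
      · refine le_csInf ⟨_, 0, rfl⟩ ?_
        rintro x ⟨j, rfl⟩
        rw [hred]
        rcases Nat.eq_zero_or_pos (j % s) with h | h
        · rw [h]; simp [Nat.mod_eq_of_lt hin]
        · exact (key i hi hle _ h (Nat.mod_lt _ (by omega))).le
end

section
/- For every integer ℓ ≥ 2 and every positive integer λ, there exists a positive integer s_0 (depending only on ℓ and λ) such that for every integer s ≥ s_0 with λ dividing 2^s−1, the BCH code C_{(2,n,2ℓ,0)} of length n = (2^s−1)/λ has dimension n − 1 − (ℓ−1)s, minimum distance exactly 2ℓ, and is distance-optimal with respect to the sphere packing bound: every binary linear code of length n and dimension n − 1 − (ℓ−1)s has minimum distance at most 2ℓ. -/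
open Finset

lemma aux_modeq (n lam s B : ℕ) (hn : lam * n = 2 ^ s - 1) (hs : 0 < s)
    (hB : B * 2 ^ (s / 2) < n) (a b d : ℕ) (ha : Odd a) (hb : Odd b) (haB : a ≤ B) (hbB : b ≤ B)
    (hd : d < s) (h : a ≡ b * 2 ^ d [MOD n]) : a = b ∧ d = 0 := by
  have h1 : 1 ≤ 2 ^ s := Nat.one_le_two_pow
  have h2s : 2 ^ s ≡ 1 [MOD n] := by
    have : 1 ≡ 2 ^ s [MOD n] := by
      rw [Nat.modEq_iff_dvd' h1, ← hn]
      exact Dvd.intro_left lam rfl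
    exact this.symm
  have key : ∀ x e : ℕ, x ≤ B → e ≤ s / 2 → x * 2 ^ e < n := by
    intro x e hx he
    refine lt_of_le_of_lt ?_ hB
    exact Nat.mul_le_mul hx (Nat.pow_le_pow_right (by norm_num) he)
  have key0 : ∀ x : ℕ, x ≤ B → x < n := by
    intro x hx
    simpa using key x 0 hx (Nat.zero_le _)
  have odd0 : ∀ x y e : ℕ, Odd x → x = y * 2 ^ e → e = 0 := by
    intro x y e hx he
    by_contra hne
    have : 2 ∣ x := by
      rw [he]
      exact Dvd.dvd.mul_left (dvd_pow_self 2 hne) y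
    rcases hx with ⟨k, hk⟩
    omega
  by_cases hds : d ≤ s / 2
  · have he : a = b * 2 ^ d := Nat.ModEq.eq_of_lt_of_lt h (key0 a haB) (key b d hbB hds)
    have := odd0 _ _ _ ha he
    subst this
    simpa using he
  · have h3 : a * 2 ^ (s - d) ≡ b [MOD n] := by
      have := h.mul_right (2 ^ (s - d))
      rw [mul_assoc, ← pow_add, Nat.add_sub_cancel' hd.le] at this
      refine this.trans ?_
      simpa using h2s.mul_left b
    have he : a * 2 ^ (s - d) = b :=
      Nat.ModEq.eq_of_lt_of_lt h3 (key a _ haB (by omega)) (key0 b hbB)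
    have := odd0 _ _ _ hb he.symm
    omega

lemma aux_coprime_s19 (n lam s : ℕ) (hn : lam * n = 2 ^ s - 1) (hs : 0 < s) (i : ℕ) :
    Nat.gcd n (2 ^ i) = 1 := by
  have hodd : Odd n := by
    rcases Nat.even_or_odd n with h | h
    · exfalso
      have h1 : 2 ∣ 2 ^ s - 1 := by
        rw [← hn]; exact Dvd.dvd.mul_left h.two_dvd lam
      have h2 : 2 ∣ 2 ^ s := dvd_pow_self 2 hs.ne'
      have h3 : 1 ≤ 2 ^ s := Nat.one_le_two_pow
      omega
    · exact h
  exact Nat.Coprime.pow_right i (Nat.coprime_two_right.mpr hodd)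

lemma aux_modeq2 (n lam s B : ℕ) (hn : lam * n = 2 ^ s - 1) (hs : 0 < s)
    (hB : B * 2 ^ (s / 2) < n) (a b i j : ℕ) (ha : Odd a) (hb : Odd b) (haB : a ≤ B) (hbB : b ≤ B)
    (hi : i < s) (hj : j < s) (h : a * 2 ^ i ≡ b * 2 ^ j [MOD n]) : a = b ∧ i = j := by
  wlog hij : i ≤ j generalizing a b i j
  · have := this b a j i hb ha hbB haB hj hi h.symm (by omega)
    exact ⟨this.1.symm, this.2.symm⟩
  have h2 : a ≡ b * 2 ^ (j - i) [MOD n] := by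
    refine Nat.ModEq.cancel_right_of_coprime (aux_coprime_s19 n lam s hn hs i) ?_
    rwa [mul_assoc, ← pow_add, Nat.sub_add_cancel hij]
  have := aux_modeq n lam s B hn hs hB a b (j - i) ha hb haB hbB (by omega) h2
  exact ⟨this.1, by omega⟩

section
variable {F : Type} [Field F] [Algebra (ZMod 2) F]

/-- The reduced syndrome map. -/
noncomputable def synd (n m : ℕ) (β : F) :
    (Fin n → ZMod 2) →ₗ[ZMod 2] (ZMod 2 × (Fin m → F)) where
  toFun c := (∑ i, c i, fun k => ∑ i : Fin n, c i • β ^ ((2 * (k : ℕ) + 1) * (i : ℕ)))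
  map_add' a b := by
    ext
    · simp [Finset.sum_add_distrib]
    · simp [add_smul, Finset.sum_add_distrib]
  map_smul' r c := by
    ext
    · simp [Finset.mul_sum]
    · simp [Finset.smul_sum, mul_smul]

lemma synd_ker (n m : ℕ) (β : F) :
    BCHCode n β (Finset.range (2 * (m + 1) - 1)) = LinearMap.ker (synd n m β) := by
  have hchar : CharP F 2 := charP_of_injective_algebraMap (algebraMap (ZMod 2) F).injective 2
  ext c
  rw [LinearMap.mem_ker]
  have hmem : c ∈ BCHCode n β (Finset.range (2 * (m + 1) - 1)) ↔
      ∀ j ∈ Finset.range (2 * (m + 1) - 1), ∑ i : Fin n, c i • β ^ (j * (i : ℕ)) = 0 := Iff.rfl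
  have h0 : ∑ i : Fin n, c i • β ^ (0 * (i : ℕ)) = algebraMap (ZMod 2) F (∑ i, c i) := by
    simp [Algebra.smul_def]
  have hsynd : synd n m β c = 0 ↔ (∑ i, c i = 0) ∧
      ∀ k : Fin m, ∑ i : Fin n, c i • β ^ ((2 * (k : ℕ) + 1) * (i : ℕ)) = 0 := by
    rw [Prod.ext_iff, funext_iff]; rfl
  rw [hmem, hsynd]
  constructor
  · intro h
    refine ⟨?_, fun k => h _ (by simp; omega)⟩
    have := h 0 (by simp; omega)
    rw [h0] at this
    exact (map_eq_zero _).mp this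
  · rintro ⟨ha, hb⟩ j
    induction j using Nat.strong_induction_on with
    | _ j ih =>
      intro hj
      simp only [Finset.mem_range] at hj ih
      rcases Nat.even_or_odd' j with ⟨k, rfl | rfl⟩
      · rcases Nat.eq_zero_or_pos k with rfl | hk
        · simpa [ha] using h0
        · have h1 := ih k (by omega) (by omega)
          have h2 : (∑ i : Fin n, c i • β ^ (k * (i : ℕ))) ^ 2 = 0 := by rw [h1]; simp
          rw [sum_pow_char] at h2
          rw [← h2]
          refine Finset.sum_congr rfl fun i _ => ?_
          rw [smul_pow, ZMod.pow_card, ← pow_mul]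
          congr 2
          ring
      · exact hb ⟨k, by omega⟩

lemma synd_surj [Finite F] (n lam s m : ℕ) (β : F) (hF : Module.finrank (ZMod 2) F = s)
    (hn : lam * n = 2 ^ s - 1) (hs : 0 < s) (hβ : orderOf β = n)
    (hB : (2 * m + 1) * 2 ^ (s / 2) < n) : Function.Surjective (synd n m β) := by
  classical
  rw [← LinearMap.range_eq_top]
  by_contra hne
  obtain ⟨f, hf0, hf⟩ := Submodule.exists_le_ker_of_lt_top _ (lt_top_iff_ne_top.mpr hne)
  -- represent f
  have hrep : ∀ g : F →ₗ[ZMod 2] ZMod 2, ∃ a : F, ∀ x, g x = Algebra.trace (ZMod 2) F (a * x) := by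
    intro g
    obtain ⟨a, ha⟩ := (LinearMap.BilinForm.toDual (Algebra.traceForm (ZMod 2) F)
      (traceForm_nondegenerate (ZMod 2) F)).surjective g
    refine ⟨a, fun x => ?_⟩
    rw [← ha]
    rfl
  choose a ha using fun k : Fin m =>
    hrep (f ∘ₗ LinearMap.inr (ZMod 2) (ZMod 2) (Fin m → F) ∘ₗ LinearMap.single (ZMod 2) (fun _ => F) k)
  have hfx : ∀ x : ZMod 2 × (Fin m → F), f x = x.1 * f (1, 0) +
      ∑ k, Algebra.trace (ZMod 2) F (a k * x.2 k) := by
    intro x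
    have h1 : x = x.1 • ((1 : ZMod 2), (0 : Fin m → F)) + LinearMap.inr (ZMod 2) (ZMod 2) (Fin m → F) x.2 := by
      ext <;> simp
    have h2 : x.2 = ∑ k, LinearMap.single (ZMod 2) (fun _ => F) k (x.2 k) := by
      simp only [LinearMap.single_apply]
      exact (Finset.univ_sum_single x.2).symm
    conv_lhs => rw [h1, h2]
    rw [map_add, map_smul, map_sum, map_sum, smul_eq_mul]
    congr 1
    refine Finset.sum_congr rfl fun k _ => ?_
    rw [← ha k]
    rfl
  have hv : ∀ i : ℕ, i < n → f (1, fun k : Fin m => β ^ ((2 * (k : ℕ) + 1) * i)) = 0 := by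
    intro i hi
    have h1 : synd n m β (Pi.single ⟨i, hi⟩ 1) = (1, fun k : Fin m => β ^ ((2 * (k : ℕ) + 1) * i)) := by
      ext
      · simp [synd]
      · simp [synd, Pi.single_apply]
    rw [← h1]
    exact hf (LinearMap.mem_range_self _ _)
  have hn0 : 0 < n := by omega
  have hfin : IsOfFinOrder β := orderOf_pos_iff.mp (by omega)
  let e : Option (Fin m × Fin s) → ℕ := fun o => o.elim 0 (fun p => (2 * (p.1 : ℕ) + 1) * 2 ^ (p.2 : ℕ))
  let w : Option (Fin m × Fin s) → F :=
    fun o => o.elim (algebraMap (ZMod 2) F (f (1, 0))) (fun p => a p.1 ^ 2 ^ (p.2 : ℕ))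
  have hinj : Function.Injective (fun o => β ^ e o) := by
    have hz : ∀ p : Fin m × Fin s, β ^ e none ≠ β ^ e (some p) := by
      intro p hp
      have h1 : β ^ ((2 * (p.1 : ℕ) + 1) * 2 ^ (p.2 : ℕ)) = 1 := by simpa [e] using hp.symm
      rw [← orderOf_dvd_iff_pow_eq_one, hβ] at h1
      have h2 := Nat.Coprime.dvd_of_dvd_mul_right (aux_coprime_s19 n lam s hn hs p.2) h1
      have h3 := Nat.le_of_dvd (by omega) h2
      have h4 : (2 * m + 1) * 1 ≤ (2 * m + 1) * 2 ^ (s / 2) :=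
        Nat.mul_le_mul_left _ Nat.one_le_two_pow
      have := p.1.2
      omega
    intro o o' h
    rcases o with _ | p <;> rcases o' with _ | q
    · rfl
    · exact absurd h (hz q)
    · exact absurd h.symm (hz p)
    · have h1 : β ^ ((2 * (p.1 : ℕ) + 1) * 2 ^ (p.2 : ℕ)) =
          β ^ ((2 * (q.1 : ℕ) + 1) * 2 ^ (q.2 : ℕ)) := h
      rw [hfin.pow_eq_pow_iff_modEq, hβ] at h1
      have := aux_modeq2 n lam s (2 * m + 1) hn hs hB _ _ _ _ ⟨_, rfl⟩ ⟨_, rfl⟩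
        (by omega) (by omega) p.2.2 q.2.2 h1
      congr 1
      ext
      · omega
      · omega
  have hcard : Nat.card (ZMod 2) = 2 := by simp
  have hsum : ∀ i : ℕ, ∑ o, w o * (β ^ e o) ^ i = 0 := by
    have hlt : ∀ i : ℕ, i < n → ∑ o, w o * (β ^ e o) ^ i = 0 := by
      intro i hi
      have h1 := congrArg (algebraMap (ZMod 2) F) (hv i hi)
      rw [hfx] at h1
      simp only [map_add, map_mul, map_sum, map_zero, map_one, one_mul] at h1
      rw [← h1, Fintype.sum_option, Fintype.sum_prod_type]
      congr 1
      · simp [w, e]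
      · refine Finset.sum_congr rfl fun k _ => ?_
        rw [FiniteField.algebraMap_trace_eq_sum_pow, hF, hcard, Finset.sum_range]
        refine Finset.sum_congr rfl fun j _ => ?_
        simp only [w, e, Option.elim]
        rw [mul_pow, ← pow_mul, ← pow_mul]
        congr 2
        ring
    intro i
    rw [← hlt (i % n) (Nat.mod_lt _ hn0)]
    refine Finset.sum_congr rfl fun o _ => ?_
    rw [← pow_mul, ← pow_mul]
    congr 1
    rw [hfin.pow_eq_pow_iff_modEq, hβ]
    exact (Nat.ModEq.mul_left _ (Nat.mod_modEq i n)).symm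
  have hli : LinearIndependent F (fun o => ((powersHom F (β ^ e o) : Multiplicative ℕ →* F) :
      Multiplicative ℕ → F)) := by
    refine (linearIndependent_monoidHom (Multiplicative ℕ) F).comp
      (fun o => powersHom F (β ^ e o)) ?_
    exact (powersHom F).injective.comp hinj
  rw [Fintype.linearIndependent_iff] at hli
  have hw := hli w (by
    funext i
    have := hsum (Multiplicative.toAdd i)
    simpa [powersHom_apply] using this)
  apply hf0
  ext1
  · ext
    have := hw none
    simp only [w, Option.elim] at this
    simpa using this
  · ext k x
    have h1 := hw (some (k, ⟨0, hs⟩))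
    simp only [w, Option.elim, pow_zero, pow_one] at h1
    have := ha k x
    rw [h1] at this
    simpa using this

lemma bch_bound (n N : ℕ) (β : F) (hβ : orderOf β = n) (c : Fin n → ZMod 2)
    (hc : c ∈ BCHCode n β (Finset.range N)) (hc0 : c ≠ 0) : N < hammingNorm c := by
  classical
  by_contra hlt
  push Not at hlt
  obtain ⟨i0, hi0⟩ := Function.ne_iff.mp hc0
  let S : Finset (Fin n) := Finset.univ.filter (fun i => c i ≠ 0)
  have hS : S.card ≤ N := hlt
  have hi0S : i0 ∈ S := by simpa [S] using hi0
  have hinj : ∀ i j : Fin n, β ^ (i : ℕ) = β ^ (j : ℕ) → i = j := by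
    intro i j h
    have hfin : IsOfFinOrder β := orderOf_pos_iff.mp (by have := i.pos; omega)
    rw [hfin.pow_eq_pow_iff_modEq, hβ] at h
    exact Fin.ext (Nat.ModEq.eq_of_lt_of_lt h i.2 j.2)
  let p : Polynomial F := ∏ i ∈ S.erase i0, (Polynomial.X - Polynomial.C (β ^ (i : ℕ)))
  have hdeg : p.natDegree < N := by
    have h1 : p.natDegree = (S.erase i0).card := by
      have h2 := Polynomial.natDegree_prod_of_monic (S.erase i0)
        (fun i : Fin n => Polynomial.X - Polynomial.C (β ^ (i : ℕ)))
        (fun i _ => Polynomial.monic_X_sub_C (β ^ (i : ℕ)))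
      simp only [Polynomial.natDegree_X_sub_C, Finset.sum_const, smul_eq_mul, mul_one] at h2
      exact h2
    rw [h1, Finset.card_erase_of_mem hi0S]
    have : 0 < S.card := Finset.card_pos.mpr ⟨i0, hi0S⟩
    omega
  have hsum : ∑ i : Fin n, c i • p.eval (β ^ (i : ℕ)) = 0 := by
    simp_rw [Polynomial.eval_eq_sum_range' hdeg, Finset.smul_sum]
    rw [Finset.sum_comm]
    refine Finset.sum_eq_zero fun j hj => ?_
    have := hc j hj
    calc ∑ i : Fin n, c i • (p.coeff j * (β ^ (i : ℕ)) ^ j)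
        = p.coeff j * ∑ i : Fin n, c i • β ^ (j * (i : ℕ)) := by
          rw [Finset.mul_sum]
          refine Finset.sum_congr rfl fun i _ => ?_
          rw [mul_smul_comm, ← pow_mul, mul_comm j]
      _ = 0 := by rw [this, mul_zero]
  rw [Finset.sum_eq_single i0] at hsum
  · rcases smul_eq_zero.mp hsum with h | h
    · exact hi0 h
    · simp only [p, Polynomial.eval_prod, Finset.prod_eq_zero_iff] at h
      obtain ⟨i, hi, h⟩ := h
      simp only [Polynomial.eval_sub, Polynomial.eval_X, Polynomial.eval_C, sub_eq_zero] at h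
      exact (Finset.ne_of_mem_erase hi) (hinj _ _ h).symm
  · intro i _ hi
    by_cases hci : c i = 0
    · simp [hci]
    · have : p.eval (β ^ (i : ℕ)) = 0 := by
        simp only [p, Polynomial.eval_prod]
        refine Finset.prod_eq_zero (i := i) ?_ (by simp)
        simp [S, hi, hci]
      rw [this, smul_zero]
  · simp

end

lemma sphere_packing (n l k : ℕ) (D : Submodule (ZMod 2) (Fin n → ZMod 2))
    (hk : Module.finrank (ZMod 2) D = k) (hd : 2 * l < minDist D) :
    2 ^ k * n.choose l ≤ 2 ^ n := by
  classical
  have hmin : ∀ c ∈ D, hammingNorm c ≤ 2 * l → c = 0 := by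
    intro c hc hw
    by_contra h0
    have : minDist D ≤ hammingNorm c := Nat.sInf_le ⟨c, hc, h0, rfl⟩
    omega
  let ind : Finset (Fin n) → (Fin n → ZMod 2) := fun S i => if i ∈ S then 1 else 0
  let P := Finset.powersetCard l (Finset.univ : Finset (Fin n))
  let g : D × P → (Fin n → ZMod 2) := fun x => x.1.1 + ind x.2.1
  have hg : Function.Injective g := by
    rintro ⟨c, S⟩ ⟨c', T⟩ h
    have h : c.1 + ind S.1 = c'.1 + ind T.1 := h
    have h1 : c.1 - c'.1 = ind T.1 - ind S.1 := by
      rw [sub_eq_sub_iff_add_eq_add, h, add_comm]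
    have h2 : hammingNorm (c.1 - c'.1) ≤ 2 * l := by
      rw [h1]
      have hsub : Finset.univ.filter (fun i => (ind T.1 - ind S.1) i ≠ 0) ⊆ T.1 ∪ S.1 := by
        intro i hi
        by_contra hcon
        simp only [Finset.mem_union, not_or] at hcon
        simp [ind, hcon.1, hcon.2] at hi
      have hT := (Finset.mem_powersetCard.mp T.2).2
      have hS := (Finset.mem_powersetCard.mp S.2).2
      calc hammingNorm (ind T.1 - ind S.1) ≤ (T.1 ∪ S.1).card := Finset.card_le_card hsub
        _ ≤ T.1.card + S.1.card := Finset.card_union_le _ _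
        _ = 2 * l := by rw [hT, hS]; ring
    have h3 := hmin _ (D.sub_mem c.2 c'.2) h2
    have hcc : c = c' := Subtype.ext (sub_eq_zero.mp h3)
    subst hcc
    have h4 : ind S.1 = ind T.1 := add_left_cancel h
    have : S = T := by
      apply Subtype.ext
      ext i
      have := congrFun h4 i
      by_cases hS : i ∈ S.1 <;> by_cases hT : i ∈ T.1 <;> simp_all [ind]
    rw [this]
  have hcard := Nat.card_le_card_of_injective g hg
  rw [Nat.card_prod, Module.natCard_eq_pow_finrank (K := ZMod 2) (V := D), hk] at hcard
  simpa [P, Nat.card_eq_fintype_card] using hcard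

lemma choose_big (n lam s l : ℕ) (hlam : 0 < lam) (hn : lam * n = 2 ^ s - 1)  (hl : 2 ≤ l)
    (hs : 2 * (2 * lam) ^ l * l.factorial < 2 ^ s) :
    2 ^ (1 + (l - 1) * s) < n.choose l := by
  have hfac : l ≤ l.factorial := Nat.self_le_factorial l
  have hpow : 2 * lam ≤ (2 * lam) ^ l := Nat.le_self_pow (by omega) _
  have h1 : 2 * (2 * lam) * l ≤ 2 * (2 * lam) ^ l * l.factorial :=
    Nat.mul_le_mul (Nat.mul_le_mul_left _ hpow) hfac
  have h2 : 2 ^ s ≤ 2 * lam * (n + 1 - l) := by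
    have : 2 * lam * n + 2 * lam ≤ 2 * lam * (n + 1 - l) + 2 * lam * l := by
      rw [← mul_add]
      have : n + 1 ≤ (n + 1 - l) + l := by omega
      calc 2 * lam * n + 2 * lam = 2 * lam * (n + 1) := by ring
        _ ≤ _ := Nat.mul_le_mul_left _ this
    have h3 : 2 * lam * n = 2 * (lam * n) := by ring
    rw [h3, hn] at this
    have h4 : 2 * (2 * lam) * l = 4 * (lam * l) := by ring
    have h5 : 2 * lam * l = 2 * (lam * l) := by ring
    rw [h4] at h1
    rw [h5] at this
    omega
  have h3 : (n + 1 - l) ^ l ≤ l.factorial * n.choose l := by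
    have := Nat.pow_sub_le_descFactorial n l
    rwa [Nat.descFactorial_eq_factorial_mul_choose] at this
  have h4 : (2 ^ s) ^ l ≤ (2 * lam) ^ l * (l.factorial * n.choose l) := by
    calc (2 ^ s) ^ l ≤ (2 * lam * (n + 1 - l)) ^ l := Nat.pow_le_pow_left h2 l
      _ = (2 * lam) ^ l * (n + 1 - l) ^ l := mul_pow _ _ _
      _ ≤ _ := Nat.mul_le_mul_left _ h3
  have h5 : (2 ^ s) ^ l = 2 ^ s * 2 ^ ((l - 1) * s) := by
    rw [← pow_mul, ← pow_add]
    congr 1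
    obtain ⟨m, rfl⟩ : ∃ m, l = m + 1 := ⟨l - 1, by omega⟩
    simp; ring
  by_contra hcon
  push Not at hcon
  have hpos : 0 < 2 ^ ((l - 1) * s) := by positivity
  have h6 : (2 * lam) ^ l * (l.factorial * n.choose l) ≤
      (2 * (2 * lam) ^ l * l.factorial) * 2 ^ ((l - 1) * s) := by
    calc (2 * lam) ^ l * (l.factorial * n.choose l)
        ≤ (2 * lam) ^ l * (l.factorial * 2 ^ (1 + (l - 1) * s)) := by gcongr
      _ = _ := by rw [pow_add]; ring
  have h7 := Nat.mul_lt_mul_of_pos_right hs hpos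
  omega

theorem stmt_19 (ℓ lam : ℕ) (hℓ : 2 ≤ ℓ) (hlam : 0 < lam) :
    ∃ s₀ : ℕ, 0 < s₀ ∧
      ∀ s : ℕ, s₀ ≤ s → lam ∣ 2 ^ s - 1 →
        ∀ α : GaloisField 2 s, orderOf α = 2 ^ s - 1 →
          Module.finrank (ZMod 2)
              (BCHCode ((2 ^ s - 1) / lam) (α ^ lam) (Finset.range (2 * ℓ - 1))) =
            (2 ^ s - 1) / lam - 1 - (ℓ - 1) * s ∧
          minDist (BCHCode ((2 ^ s - 1) / lam) (α ^ lam) (Finset.range (2 * ℓ - 1))) =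
            2 * ℓ ∧
          ∀ D : Submodule (ZMod 2) (Fin ((2 ^ s - 1) / lam) → ZMod 2),
            Module.finrank (ZMod 2) D = (2 ^ s - 1) / lam - 1 - (ℓ - 1) * s →
              minDist D ≤ 2 * ℓ := by
  obtain ⟨m, rfl⟩ : ∃ m, ℓ = m + 1 := ⟨ℓ - 1, by omega⟩
  refine ⟨2 * (4 * (m + 2) * lam + 2 * (2 * lam) ^ (m + 1) * (m + 1).factorial +
    lam * (m + 4) + 4), by positivity, ?_⟩
  intro s hs hdvd α hα
  set n := (2 ^ s - 1) / lam with hndef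
  have hn : lam * n = 2 ^ s - 1 := Nat.mul_div_cancel' hdvd
  set β := α ^ lam with hβdef
  have hs2 : 4 * (m + 2) * lam + 2 * (2 * lam) ^ (m + 1) * (m + 1).factorial +
    lam * (m + 4) + 4 ≤ s / 2 := by omega
  have hspos : 0 < s := by omega
  have hhalf : s / 2 < 2 ^ (s / 2) := Nat.lt_two_pow_self
  have hsq : 2 ^ (s / 2) * 2 ^ (s / 2) ≤ 2 ^ s := by
    rw [← pow_add]; exact Nat.pow_le_pow_right (by norm_num) (by omega)
  have hB : (2 * m + 1) * 2 ^ (s / 2) < n := by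
    refine lt_of_mul_lt_mul_left (a := lam) ?_ (Nat.zero_le _)
    rw [hn]
    have h1 : 4 * (m + 2) * lam + 4 ≤ 2 ^ (s / 2) := by omega
    have h2 := Nat.mul_le_mul_right (2 ^ (s / 2)) h1
    have h3 : (4 * (m + 2) * lam + 4) * 2 ^ (s / 2) = 2 * (lam * ((2 * m + 1) * 2 ^ (s / 2)))
      + 6 * lam * 2 ^ (s / 2) + 4 * 2 ^ (s / 2) := by ring
    omega
  have hbig : 2 * (2 * lam) ^ (m + 1) * (m + 1).factorial < 2 ^ s := by
    have : 2 ^ (s / 2) ≤ 2 ^ s := Nat.pow_le_pow_right (by norm_num) (by omega)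
    omega
  have hα0 : orderOf α ≠ 0 := by
    rw [hα]
    have : 2 ^ 1 ≤ 2 ^ s := Nat.pow_le_pow_right (by norm_num) hspos
    omega
  have hβ : orderOf β = n := by
    rw [hβdef, orderOf_pow_of_dvd hlam.ne' (by rwa [hα]), hα]
  have hF : Module.finrank (ZMod 2) (GaloisField 2 s) = s := GaloisField.finrank 2 hspos.ne'
  have hsurj := synd_surj n lam s m β hF hn hspos hβ hB
  have hrank := LinearMap.finrank_range_add_finrank_ker (synd n m β)
  rw [LinearMap.range_eq_top.mpr hsurj, finrank_top, Module.finrank_prod, Module.finrank_self,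
    Module.finrank_pi_fintype] at hrank
  simp only [hF, Finset.sum_const, Finset.card_univ, Fintype.card_fin, smul_eq_mul,
    Module.finrank_fintype_fun_eq_card] at hrank
  have hdim : Module.finrank (ZMod 2) (BCHCode n β (Finset.range (2 * (m + 1) - 1))) =
      n - 1 - (m + 1 - 1) * s := by
    rw [synd_ker]
    simp only [Nat.add_sub_cancel]
    omega
  have hopt : ∀ D : Submodule (ZMod 2) (Fin n → ZMod 2),
      Module.finrank (ZMod 2) D = n - 1 - (m + 1 - 1) * s → minDist D ≤ 2 * (m + 1) := by
    intro D hD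
    by_contra hcon
    push Not at hcon
    have h1 := sphere_packing n (m + 1) _ D hD hcon
    have h2 := choose_big n lam s (m + 1) hlam hn hℓ hbig
    have h3 : 2 ^ n = 2 ^ (n - 1 - (m + 1 - 1) * s) * 2 ^ (1 + (m + 1 - 1) * s) := by
      rw [← pow_add]
      congr 1
      simp only [Nat.add_sub_cancel]
      omega
    rw [h3] at h1
    have := Nat.le_of_mul_le_mul_left h1 (by positivity)
    omega
  refine ⟨hdim, le_antisymm (hopt _ hdim) ?_, hopt⟩
  have hposdim : 0 < n - 1 - (m + 1 - 1) * s := by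
    simp only [Nat.add_sub_cancel]
    have h1 : m * s + 1 < n := by
      refine lt_of_le_of_lt ?_ hB
      have h2 : s ≤ 2 * 2 ^ (s / 2) - 1 := by omega
      have h3 : m * s ≤ m * (2 * 2 ^ (s / 2)) := Nat.mul_le_mul_left _ (by omega)
      have h4 : (2 * m + 1) * 2 ^ (s / 2) = m * (2 * 2 ^ (s / 2)) + 2 ^ (s / 2) := by ring
      omega
    omega
  rw [← hdim, Module.finrank_pos_iff_exists_ne_zero] at hposdim
  obtain ⟨x, hx⟩ := hposdim
  refine le_csInf ⟨_, x.1, x.2, fun h => hx (Subtype.ext h), rfl⟩ ?_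
  rintro w ⟨c, hc, hc0, rfl⟩
  have := bch_bound n _ β hβ c hc hc0
  omega
end
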